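/- Let 0 ≤ ε < √2·log 2. Then for every φ ∈ BMO^d_ε([0,1]), the function e^φ is integrable on [0,1] and ∫₀¹ e^φ ≤ (e^{−ε/√2}/(2 − e^{ε/√2}))·e^{∫₀¹ φ}. -/

import Mathlib

/-!
The proof is a Bellman function argument. Put `α = ε / √2` and `ψ(s) = e^s (1 - s)`, and attach
`B(x, v) = e^x ψ(√(η² + 2α² - v))` to an interval on which `φ` has mean `x` and variance `v ≤ 2α²`.
If `B` satisfies the midpoint inequality `B(x₁, v₁) + B(x₂, v₂) ≤ 2 B(x, v)` for every dyadic
bisection, then the averages of `B` decrease along the dyadic generations, which bounds the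
averages of `e^x` by `ψ(η) / ψ(√(η² + 2α²))` times `e^{∫φ}`.

Small jumps satisfy the midpoint inequality because the concave function `t ↦ ψ(√t)` lies below its
tangent lines. The defect of a large jump shrinks as the variances of the parent and of the half
with the larger mean increase to `2α²`; the remaining defect is quasi-concave in the jump and
nonnegative where large jumps begin, so it suffices that it is nonnegative at the largest jump,
where the other half has variance `0`. The parameter `η` is chosen such that it vanishes there:
`(2 - e^α) ψ(η) = e^{-α} ψ(√(η² + 2α²))`, which makes the ratio above the sharp constant. Lebesgue
differentiation and Fatou's lemma pass from the dyadic averages of `φ` to `φ` itself.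
-/

open MeasureTheory Real

/-- The average of `φ` over the interval with endpoints `a`, `b`. -/
noncomputable def avg (φ : ℝ → ℝ) (a b : ℝ) : ℝ := (∫ t in a..b, φ t) / (b - a)

/-- `φ ∈ BMO_ε([a,b])`: `φ` and `φ²` are integrable on `[a,b]` and the mean
oscillation `⟨φ²⟩_J − ⟨φ⟩_J²` is at most `ε²` on every nondegenerate
subinterval `J = [c,d] ⊆ [a,b]`. -/
def BMOe (ε a b : ℝ) (φ : ℝ → ℝ) : Prop :=
  IntervalIntegrable φ volume a b ∧
  IntervalIntegrable (fun t => (φ t) ^ 2) volume a b ∧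
  ∀ c d : ℝ, a ≤ c → c < d → d ≤ b →
    avg (fun t => (φ t) ^ 2) c d - (avg φ c d) ^ 2 ≤ ε ^ 2
/-- `φ ∈ BMO^d_ε([0,1])`: `φ` and `φ²` are integrable on `[0,1]` and the mean
oscillation is at most `ε²` on every dyadic subinterval
`[k/2^n, (k+1)/2^n]` of `[0,1]`. -/
def BMOd (ε : ℝ) (φ : ℝ → ℝ) : Prop :=
  IntervalIntegrable φ volume 0 1 ∧
  IntervalIntegrable (fun t => (φ t) ^ 2) volume 0 1 ∧
  ∀ n k : ℕ, k < 2 ^ n →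
    avg (fun t => (φ t) ^ 2) ((k : ℝ) / 2 ^ n) (((k : ℝ) + 1) / 2 ^ n)
      - (avg φ ((k : ℝ) / 2 ^ n) (((k : ℝ) + 1) / 2 ^ n)) ^ 2 ≤ ε ^ 2

open Set Filter
open scoped Topology ENNReal

section Profile

/-- The profile `ψ(s) = e^s (1 - s)` of the Bellman function of the integral John–Nirenberg
inequality, which at mean `x` and variance `v` is a multiple of `e^x ψ(√(δ² - v))`. -/
noncomputable def psi (s : ℝ) : ℝ := exp s * (1 - s)

lemma psi_zero : psi 0 = 1 := by simp [psi]

lemma psi_one : psi 1 = 0 := by simp [psi]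

lemma psi_pos {s : ℝ} (hs : s < 1) : 0 < psi s :=
  mul_pos (exp_pos s) (sub_pos.2 hs)

lemma psi_neg {s : ℝ} (hs : 1 < s) : psi s < 0 :=
  mul_neg_of_pos_of_neg (exp_pos s) (sub_neg.2 hs)

lemma hasDerivAt_psi (s : ℝ) : HasDerivAt psi (-s * exp s) s :=
  ((Real.hasDerivAt_exp s).mul ((hasDerivAt_id s).const_sub 1)).congr_deriv <| by
    simp only [id_eq]; ring

@[fun_prop] lemma continuous_psi : Continuous psi := by
  unfold psi; fun_prop

lemma antitoneOn_psi : AntitoneOn psi (Ici 0) := by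
  refine antitoneOn_of_hasDerivWithinAt_nonpos (convex_Ici 0) continuous_psi.continuousOn
    (fun s _ => (hasDerivAt_psi s).hasDerivWithinAt) fun s hs => ?_
  rw [interior_Ici, mem_Ioi] at hs
  exact mul_nonpos_of_nonpos_of_nonneg (neg_nonpos.2 hs.le) (exp_pos s).le

lemma monotoneOn_psi : MonotoneOn psi (Iic 0) := by
  refine monotoneOn_of_hasDerivWithinAt_nonneg (convex_Iic 0) continuous_psi.continuousOn
    (fun s _ => (hasDerivAt_psi s).hasDerivWithinAt) fun s hs => ?_
  rw [interior_Iic, mem_Iio] at hs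
  exact mul_nonneg (neg_nonneg.2 hs.le) (exp_pos s).le

-- For `0 ≤ τ` the right-hand side is the tangent line at `τ²` of the concave function `t ↦ ψ(√t)`,
-- evaluated at `p²`.
lemma psi_le_exp_mul {p τ : ℝ} (hp : 0 ≤ p) (hτ : -p ≤ τ) :
    psi p ≤ exp τ * (1 - τ + (τ ^ 2 - p ^ 2) / 2) := by
  set H : ℝ → ℝ := fun t => exp t * (1 - t + (t ^ 2 - p ^ 2) / 2) with hH
  have hderiv (t : ℝ) : HasDerivAt H (exp t * ((t ^ 2 - p ^ 2) / 2)) t :=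
    ((Real.hasDerivAt_exp t).mul (((hasDerivAt_id t).const_sub 1).add
      (((hasDerivAt_pow 2 t).sub_const (p ^ 2)).div_const 2))).congr_deriv <| by
      simp only [id_eq, Pi.add_apply, Nat.cast_ofNat, Nat.add_one_sub_one, pow_one]
      ring
  have hcont : Continuous H := by fun_prop
  have hanti : AntitoneOn H (Icc (-p) p) := by
    refine antitoneOn_of_hasDerivWithinAt_nonpos (convex_Icc _ _) hcont.continuousOn
      (fun t _ => (hderiv t).hasDerivWithinAt) fun t ht => ?_
    rw [interior_Icc] at ht
    have : t ^ 2 ≤ p ^ 2 := sq_le_sq' ht.1.le ht.2.le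
    exact mul_nonpos_of_nonneg_of_nonpos (exp_pos t).le (by linarith)
  have hmono : MonotoneOn H (Ici p) := by
    refine monotoneOn_of_hasDerivWithinAt_nonneg (convex_Ici p) hcont.continuousOn
      (fun t _ => (hderiv t).hasDerivWithinAt) fun t ht => ?_
    rw [interior_Ici, mem_Ioi] at ht
    have : p ^ 2 ≤ t ^ 2 := pow_le_pow_left₀ hp ht.le 2
    exact mul_nonneg (exp_pos t).le (by linarith)
  have hmin : H p ≤ H τ := by
    rcases le_total p τ with h | h
    · exact hmono self_mem_Ici h h
    · exact hanti ⟨hτ, h⟩ ⟨hτ.trans h, le_rfl⟩ h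
  simpa [hH, psi] using hmin

lemma hasDerivAt_psi_sqrt {c b : ℝ} (h : 0 < c + 2 * b ^ 2) :
    HasDerivAt (fun b => psi √(c + 2 * b ^ 2)) (-(2 * b * exp √(c + 2 * b ^ 2))) b := by
  have hinner : HasDerivAt (fun b : ℝ => c + 2 * b ^ 2) (4 * b) b :=
    (((hasDerivAt_pow 2 b).const_mul 2).const_add c).congr_deriv <| by
      simp only [Nat.cast_ofNat, Nat.add_one_sub_one, pow_one]
      ring
  refine ((hasDerivAt_psi _).comp b (hinner.sqrt h.ne')).congr_deriv ?_
  have : 0 < √(c + 2 * b ^ 2) := sqrt_pos.2 h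
  field_simp
  ring

lemma hasDerivAt_exp_mul_psi_sqrt {c b : ℝ} (h : 0 < c + 2 * b ^ 2) :
    HasDerivAt (fun b => exp b * psi √(c + 2 * b ^ 2))
      (exp (-b) * psi (√(c + 2 * b ^ 2) + 2 * b)) b := by
  refine ((Real.hasDerivAt_exp b).mul (hasDerivAt_psi_sqrt h)).congr_deriv ?_
  have hexp : exp (-b) * exp (√(c + 2 * b ^ 2) + 2 * b) = exp b * exp √(c + 2 * b ^ 2) := by
    rw [← exp_add, ← exp_add]; ring_nf
  simp only [psi]
  linear_combination (-(1 - (√(c + 2 * b ^ 2) + 2 * b))) * hexp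

lemma hasDerivAt_exp_neg_mul_psi_sqrt {c b : ℝ} (h : 0 < c + 2 * b ^ 2) :
    HasDerivAt (fun b => exp (-b) * psi √(c + 2 * b ^ 2))
      (-(exp b * psi (√(c + 2 * b ^ 2) - 2 * b))) b := by
  have := (hasDerivAt_exp_mul_psi_sqrt (c := c) (b := -b) (by simpa using h)).comp b
    (hasDerivAt_neg b)
  simpa [Function.comp_def, sub_eq_add_neg] using this

end Profile

section JumpInequality

lemma exp_mul_psi_add_le_of_le_add {p q m a : ℝ} (hp : 0 ≤ p) (hq : 0 ≤ q) (hm : 0 ≤ m)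
    (ha : 0 ≤ a) (h : p ^ 2 + q ^ 2 = 2 * m ^ 2 + 2 * a ^ 2) (ham : a ≤ m + p) :
    exp a * psi p + exp (-a) * psi q ≤ 2 * psi m := by
  have hexp₁ : exp a * exp (m - a) = exp m := by rw [← exp_add]; ring_nf
  have hexp₂ : exp (-a) * exp (m + a) = exp m := by rw [← exp_add]; ring_nf
  calc exp a * psi p + exp (-a) * psi q
      ≤ exp a * (exp (m - a) * (1 - (m - a) + ((m - a) ^ 2 - p ^ 2) / 2)) +
        exp (-a) * (exp (m + a) * (1 - (m + a) + ((m + a) ^ 2 - q ^ 2) / 2)) := by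
        gcongr
        · exact psi_le_exp_mul hp (by linarith)
        · exact psi_le_exp_mul hq (by linarith)
    _ = 2 * psi m := by
        rw [← mul_assoc, ← mul_assoc, hexp₁, hexp₂, psi]
        linear_combination (-exp m / 2) * h

lemma antitoneOn_exp_mul_psi_sqrt_add {m q a₀ : ℝ} (hq : 0 ≤ q) (hm : 0 ≤ m) (hma : m ≤ a₀)
    (hqa : q ^ 2 ≤ 2 * m ^ 2 + 2 * a₀ ^ 2) :
    AntitoneOn (fun b => exp b * psi √(2 * m ^ 2 - q ^ 2 + 2 * b ^ 2) + exp (-b) * psi q)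
      (Ici a₀) := by
  have ha₀ : 0 ≤ a₀ := hm.trans hma
  have hpos {b : ℝ} (hb : a₀ < b) : 0 < 2 * m ^ 2 - q ^ 2 + 2 * b ^ 2 := by
    have : a₀ ^ 2 < b ^ 2 := pow_lt_pow_left₀ hb ha₀ two_ne_zero
    linarith
  refine antitoneOn_of_hasDerivWithinAt_nonpos
    (f' := fun b => exp (-b) * (psi (√(2 * m ^ 2 - q ^ 2 + 2 * b ^ 2) + 2 * b) - psi q))
    (convex_Ici a₀) (by fun_prop) (fun b hb => ?_) fun b hb => ?_
  all_goals rw [interior_Ici, mem_Ioi] at hb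
  · refine HasDerivAt.hasDerivWithinAt (((hasDerivAt_exp_mul_psi_sqrt (hpos hb)).add
      (((hasDerivAt_neg b).exp).mul_const (psi q))).congr_deriv ?_)
    ring
  · set r := √(2 * m ^ 2 - q ^ 2 + 2 * b ^ 2)
    have hr : 0 ≤ r := sqrt_nonneg _
    have hb₀ : 0 ≤ b := ha₀.trans hb.le
    have hr2 : r ^ 2 = 2 * m ^ 2 - q ^ 2 + 2 * b ^ 2 := sq_sqrt (hpos hb).le
    have hqr : q ≤ r + 2 * b := by
      refine le_of_sq_le_sq ?_ (by positivity)
      nlinarith [mul_nonneg hr hb₀]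
    exact mul_nonpos_of_nonneg_of_nonpos (exp_pos _).le
      (sub_nonpos.2 (antitoneOn_psi hq (hq.trans hqr) hqr))

lemma monotoneOn_two_mul_psi_sub {η a : ℝ} (hη : 0 ≤ η) :
    MonotoneOn (fun b => 2 * psi b - exp (-a) * psi √(2 * a ^ 2 - η ^ 2 + 2 * b ^ 2))
      (Icc η (a - η)) := by
  have hpos {b : ℝ} (hb : η < b) : 0 < 2 * a ^ 2 - η ^ 2 + 2 * b ^ 2 := by
    nlinarith [sq_nonneg a]
  refine monotoneOn_of_hasDerivWithinAt_nonneg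
    (f' := fun b => 2 * b * (exp (-a) * exp √(2 * a ^ 2 - η ^ 2 + 2 * b ^ 2) - exp b))
    (convex_Icc _ _) (by fun_prop) (fun b hb => ?_) fun b hb => ?_
  all_goals rw [interior_Icc] at hb
  · refine HasDerivAt.hasDerivWithinAt ((((hasDerivAt_psi b).const_mul 2).sub
      ((hasDerivAt_psi_sqrt (hpos hb.1)).const_mul (exp (-a)))).congr_deriv ?_)
    ring
  · have hroot : a + b ≤ √(2 * a ^ 2 - η ^ 2 + 2 * b ^ 2) :=
      le_sqrt_of_sq_le (by nlinarith [hb.2])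
    refine mul_nonneg (by linarith [hb.1]) ?_
    rw [← exp_add, sub_nonneg, exp_le_exp]
    linarith

/-- The defect `2ψ(η) - e^b ψ(η) - e^{-b} ψ(√(η² + 2b²))` of the midpoint inequality for the
Bellman function in its extremal configuration: a jump of size `2b` with `η` the radius both of
the parent and of the upper child. -/
noncomputable def extremalGap (η b : ℝ) : ℝ :=
  (2 - exp b) * psi η - exp (-b) * psi √(η ^ 2 + 2 * b ^ 2)

lemma continuous_extremalGap : Continuous fun x : ℝ × ℝ => extremalGap x.1 x.2 := by
  unfold extremalGap; fun_prop

lemma hasDerivAt_extremalGap {η b : ℝ} (h : 0 < η ^ 2 + 2 * b ^ 2) :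
    HasDerivAt (extremalGap η) (exp b * (psi (√(η ^ 2 + 2 * b ^ 2) - 2 * b) - psi η)) b :=
  ((((Real.hasDerivAt_exp b).const_sub 2).mul_const (psi η)).sub
    (hasDerivAt_exp_neg_mul_psi_sqrt h)).congr_deriv (by ring)

lemma extremalGap_zero_nonpos {b : ℝ} (hb : 0 ≤ b) : extremalGap 0 b ≤ 0 := by
  have hanti : AntitoneOn (extremalGap 0) (Ici 0) := by
    refine antitoneOn_of_hasDerivWithinAt_nonpos (convex_Ici 0)
      (continuous_extremalGap.comp (Continuous.prodMk_right 0)).continuousOn (fun b hb =>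
        (hasDerivAt_extremalGap ?_).hasDerivWithinAt) fun b hb => ?_
    all_goals rw [interior_Ici, mem_Ioi] at hb
    · positivity
    · have hroot : √(0 ^ 2 + 2 * b ^ 2) - 2 * b ≤ 0 :=
        sub_nonpos.2 (sqrt_le_iff.2 ⟨by positivity, by nlinarith⟩)
      exact mul_nonpos_of_nonneg_of_nonpos (exp_pos b).le
        (sub_nonpos.2 (monotoneOn_psi hroot self_mem_Iic hroot))
  calc extremalGap 0 b ≤ extremalGap 0 0 := hanti self_mem_Ici hb hb
    _ = 0 := by norm_num [extremalGap, psi_zero]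

lemma extremalGap_two_mul_self_nonneg {η : ℝ} (hη : 0 ≤ η) : 0 ≤ extremalGap η (2 * η) := by
  have hroot : √(η ^ 2 + 2 * (2 * η) ^ 2) = 3 * η := by
    rw [show η ^ 2 + 2 * (2 * η) ^ 2 = (3 * η) ^ 2 by ring, sqrt_sq (by positivity)]
  have := exp_mul_psi_add_le_of_le_add (q := 3 * η) (a := 2 * η) hη (by positivity) hη
    (by positivity) (by ring) (by linarith)
  rw [extremalGap, hroot]
  linarith

lemma antitoneOn_sqrt_sq_add_sub_two_mul (η : ℝ) :
    AntitoneOn (fun b => √(η ^ 2 + 2 * b ^ 2) - 2 * b) (Ici 0) := by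
  intro b (hb : 0 ≤ b) c _ hbc
  have hsq := sq_sqrt (show 0 ≤ η ^ 2 + 2 * b ^ 2 by positivity)
  have hbr : b ≤ √(η ^ 2 + 2 * b ^ 2) := le_sqrt_of_sq_le (by nlinarith [sq_nonneg η])
  set r := √(η ^ 2 + 2 * b ^ 2)
  have : √(η ^ 2 + 2 * c ^ 2) ≤ r + 2 * (c - b) := by
    refine sqrt_le_iff.2 ⟨by linarith, ?_⟩
    nlinarith [sq_nonneg (c - b), mul_nonneg (sub_nonneg.2 hbc) (sub_nonneg.2 hbr)]
  change √(η ^ 2 + 2 * c ^ 2) - 2 * c ≤ r - 2 * b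
  linarith

lemma min_le_of_hasDerivAt_mul_antitoneOn {f w g : ℝ → ℝ} {l u x : ℝ}
    (hf : ContinuousOn f (Icc l u)) (hderiv : ∀ y ∈ Ioo l u, HasDerivAt f (w y * g y) y)
    (hw : ∀ y ∈ Ioo l u, 0 ≤ w y) (hg : AntitoneOn g (Icc l u)) (hx : x ∈ Icc l u) :
    min (f l) (f u) ≤ f x := by
  rcases le_total 0 (g x) with h | h
  · have hsub : Icc l x ⊆ Icc l u := Icc_subset_Icc_right hx.2
    have hmono : MonotoneOn f (Icc l x) := by
      refine monotoneOn_of_hasDerivWithinAt_nonneg (f' := fun y => w y * g y) (convex_Icc _ _)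
        (hf.mono hsub) (fun y hy => ?_) fun y hy => ?_
      all_goals rw [interior_Icc] at hy
      · exact (hderiv y ⟨hy.1, hy.2.trans_le hx.2⟩).hasDerivWithinAt
      · exact mul_nonneg (hw y ⟨hy.1, hy.2.trans_le hx.2⟩)
          (h.trans (hg (hsub (Ioo_subset_Icc_self hy)) hx hy.2.le))
    exact min_le_of_left_le (hmono ⟨le_rfl, hx.1⟩ ⟨hx.1, le_rfl⟩ hx.1)
  · have hsub : Icc x u ⊆ Icc l u := Icc_subset_Icc_left hx.1
    have hanti : AntitoneOn f (Icc x u) := by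
      refine antitoneOn_of_hasDerivWithinAt_nonpos (f' := fun y => w y * g y) (convex_Icc _ _)
        (hf.mono hsub) (fun y hy => ?_) fun y hy => ?_
      all_goals rw [interior_Icc] at hy
      · exact (hderiv y ⟨hx.1.trans_lt hy.1, hy.2⟩).hasDerivWithinAt
      · exact mul_nonpos_of_nonneg_of_nonpos (hw y ⟨hx.1.trans_lt hy.1, hy.2⟩)
          ((hg hx (hsub (Ioo_subset_Icc_self hy)) hy.1.le).trans h)
    exact min_le_of_right_le (hanti ⟨le_rfl, hx.2⟩ ⟨hx.2, le_rfl⟩ hx.2)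

lemma extremalGap_nonneg {η α a : ℝ} (hη : 0 ≤ η) (hα : 0 ≤ extremalGap η α)
    (ha : a ∈ Icc (2 * η) α) : 0 ≤ extremalGap η a := by
  have hnonneg : Icc (2 * η) α ⊆ Ici 0 := fun b hb => (by positivity : 0 ≤ 2 * η).trans hb.1
  refine (le_min (extremalGap_two_mul_self_nonneg hη) hα).trans
    (min_le_of_hasDerivAt_mul_antitoneOn
      (continuous_extremalGap.comp (Continuous.prodMk_right η)).continuousOn
      (fun b hb => hasDerivAt_extremalGap ?_) (fun b _ => (exp_pos b).le) ?_ ha)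
  · have : 0 < b := lt_of_le_of_lt (by positivity) hb.1
    positivity
  · have hroot : MapsTo (fun b => √(η ^ 2 + 2 * b ^ 2) - 2 * b) (Icc (2 * η) α) (Iic 0) := by
      intro b hb
      have : η ^ 2 ≤ b ^ 2 := pow_le_pow_left₀ hη (by linarith [hb.1]) 2
      exact sub_nonpos.2 (sqrt_le_iff.2 ⟨mul_nonneg two_pos.le (hnonneg hb), by nlinarith⟩)
    exact fun b hb c hc hbc => sub_le_sub_right (monotoneOn_psi (hroot hc) (hroot hb)
      (antitoneOn_sqrt_sq_add_sub_two_mul η (hnonneg hb) (hnonneg hc) hbc)) _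

lemma exp_mul_psi_add_le {η α p q m a : ℝ} (hη : 0 ≤ η) (hα : 0 ≤ α)
    (hgap : 0 ≤ extremalGap η α) (hp : η ≤ p) (hq : 0 ≤ q) (hqα : q ^ 2 ≤ η ^ 2 + 2 * α ^ 2)
    (hm : η ≤ m) (ha : 0 ≤ a) (h : p ^ 2 + q ^ 2 = 2 * m ^ 2 + 2 * a ^ 2) :
    exp a * psi p + exp (-a) * psi q ≤ 2 * psi m := by
  have hp₀ := hη.trans hp
  have hm₀ := hη.trans hm
  rcases le_total a (m + p) with hamp | hamp
  · exact exp_mul_psi_add_le_of_le_add hp₀ hq hm₀ ha h hamp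
  -- For larger jumps, lower first `p` and then `m` to `η`, ending in the extremal configuration.
  have hηp : η ^ 2 ≤ p ^ 2 := pow_le_pow_left₀ hη hp 2
  have hηm : η ^ 2 ≤ m ^ 2 := pow_le_pow_left₀ hη hm 2
  have hmaq : a + m ≤ q := le_of_sq_le_sq (by nlinarith) hq
  obtain ⟨a₀, ha₀, hsq⟩ : ∃ a₀ : ℝ, 0 ≤ a₀ ∧ 2 * a₀ ^ 2 = η ^ 2 + q ^ 2 - 2 * m ^ 2 :=
    ⟨√((η ^ 2 + q ^ 2 - 2 * m ^ 2) / 2), sqrt_nonneg _, by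
      rw [sq_sqrt (by nlinarith)]; ring⟩
  have hma₀ : m ≤ a₀ := le_of_sq_le_sq (by nlinarith) ha₀
  have ha₀a : a₀ ≤ a := le_of_sq_le_sq (by linarith) ha
  have hηa₀ : η ≤ a₀ - m := le_of_sq_le_sq (by nlinarith) (by linarith)
  have ha₀α : a₀ ≤ α := le_of_sq_le_sq (by linarith) hα
  have hlower_p : exp a * psi p + exp (-a) * psi q ≤ exp a₀ * psi η + exp (-a₀) * psi q := by
    have := antitoneOn_exp_mul_psi_sqrt_add hq hm₀ hma₀ (by nlinarith) self_mem_Ici ha₀a ha₀a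
    simpa only [show 2 * m ^ 2 - q ^ 2 + 2 * a ^ 2 = p ^ 2 by linarith,
      show 2 * m ^ 2 - q ^ 2 + 2 * a₀ ^ 2 = η ^ 2 by linarith, sqrt_sq hp₀, sqrt_sq hη] using this
  have hlower_m : 2 * psi η - exp (-a₀) * psi √(η ^ 2 + 2 * a₀ ^ 2) ≤
      2 * psi m - exp (-a₀) * psi q := by
    have := monotoneOn_two_mul_psi_sub (a := a₀) hη ⟨le_rfl, by linarith⟩ ⟨hm, by linarith⟩ hm
    simpa only [show 2 * a₀ ^ 2 - η ^ 2 + 2 * η ^ 2 = η ^ 2 + 2 * a₀ ^ 2 by ring,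
      show 2 * a₀ ^ 2 - η ^ 2 + 2 * m ^ 2 = q ^ 2 by linarith, sqrt_sq hq] using this
  have hextremal : 0 ≤ extremalGap η a₀ := extremalGap_nonneg hη hgap ⟨by linarith, ha₀α⟩
  rw [extremalGap] at hextremal
  linarith

lemma exists_extremalGap_eq_zero {α : ℝ} (hα : 0 ≤ α) (hα₂ : α < log 2) :
    ∃ η, 0 ≤ η ∧ extremalGap η α = 0 ∧ 0 < psi √(η ^ 2 + 2 * α ^ 2) := by
  rcases hα.eq_or_lt with rfl | hpos
  · exact ⟨0, le_rfl, by norm_num [extremalGap, psi_zero], by simp [psi_zero]⟩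
  have hradius : 1 < √(1 ^ 2 + 2 * α ^ 2) := by
    rw [lt_sqrt zero_le_one]
    linarith [pow_pos hpos 2]
  have hgap_one : 0 < extremalGap 1 α := by
    rw [extremalGap, psi_one, mul_zero, zero_sub, neg_pos]
    exact mul_neg_of_pos_of_neg (exp_pos _) (psi_neg hradius)
  obtain ⟨η, hη, hgap⟩ := intermediate_value_Ico zero_le_one
    (continuous_extremalGap.comp (Continuous.prodMk_left α)).continuousOn
    ⟨extremalGap_zero_nonpos hα, hgap_one⟩
  refine ⟨η, hη.1, hgap, pos_of_mul_pos_right ?_ (exp_pos (-α)).le⟩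
  have hexp : exp α < 2 := (lt_log_iff_exp_lt two_pos).1 hα₂
  calc 0 < (2 - exp α) * psi η := mul_pos (sub_pos.2 hexp) (psi_pos hη.2)
    _ = exp (-α) * psi √(η ^ 2 + 2 * α ^ 2) := sub_eq_zero.1 hgap

end JumpInequality

section Bellman

/-- The candidate Bellman function at mean `x` and variance `v`, up to a constant factor. The
variance runs over `[0, ε²]` with `ε² = 2α²`, and the radius is `δ = √(η² + 2α²)`. -/
noncomputable def bellman (η α x v : ℝ) : ℝ := exp x * psi √(η ^ 2 + 2 * α ^ 2 - v)

lemma bellman_add_bellman_le {η α x₁ x₂ v₁ v₂ x v : ℝ} (hη : 0 ≤ η) (hα : 0 ≤ α)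
    (hgap : 0 ≤ extremalGap η α) (hv₁ : v₁ ∈ Icc 0 (2 * α ^ 2)) (hv₂ : v₂ ∈ Icc 0 (2 * α ^ 2))
    (hx : x = (x₁ + x₂) / 2) (hv : v = (v₁ + v₂) / 2 + ((x₁ - x₂) / 2) ^ 2)
    (hvα : v ≤ 2 * α ^ 2) :
    bellman η α x₁ v₁ + bellman η α x₂ v₂ ≤ 2 * bellman η α x v := by
  wlog hle : x₂ ≤ x₁ generalizing x₁ x₂ v₁ v₂
  · rw [add_comm]
    exact this hv₂ hv₁ (by rw [hx]; ring) (by rw [hv]; ring) (le_of_not_ge hle)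
  have hradius {w : ℝ} (hw : w ≤ 2 * α ^ 2) : η ≤ √(η ^ 2 + 2 * α ^ 2 - w) :=
    le_sqrt_of_sq_le (by linarith)
  have hradius_sq {w : ℝ} (hw : w ≤ 2 * α ^ 2) :
      √(η ^ 2 + 2 * α ^ 2 - w) ^ 2 = η ^ 2 + 2 * α ^ 2 - w :=
    sq_sqrt (by linarith [sq_nonneg η])
  have hjump := exp_mul_psi_add_le (a := (x₁ - x₂) / 2) hη hα hgap (hradius hv₁.2)
    (sqrt_nonneg _) (by rw [hradius_sq hv₂.2]; linarith [hv₂.1]) (hradius hvα) (by linarith)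
    (by rw [hradius_sq hv₁.2, hradius_sq hv₂.2, hradius_sq hvα, hv]; ring)
  have hexp₁ : exp x₁ = exp x * exp ((x₁ - x₂) / 2) := by rw [← exp_add, hx]; ring_nf
  have hexp₂ : exp x₂ = exp x * exp (-((x₁ - x₂) / 2)) := by rw [← exp_add, hx]; ring_nf
  have := mul_le_mul_of_nonneg_left hjump (exp_pos x).le
  rw [bellman, bellman, bellman, hexp₁, hexp₂]
  linarith

lemma exp_mul_psi_le_bellman {η α v : ℝ} (x : ℝ) (hv : 0 ≤ v) :
    exp x * psi √(η ^ 2 + 2 * α ^ 2) ≤ bellman η α x v :=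
  mul_le_mul_of_nonneg_left (antitoneOn_psi (sqrt_nonneg _) (sqrt_nonneg _)
    (sqrt_le_sqrt (by linarith))) (exp_pos x).le

lemma bellman_le_exp_mul_psi {η α v : ℝ} (x : ℝ) (hη : 0 ≤ η) (hv : v ≤ 2 * α ^ 2) :
    bellman η α x v ≤ exp x * psi η :=
  mul_le_mul_of_nonneg_left (antitoneOn_psi hη (sqrt_nonneg _)
    (le_sqrt_of_sq_le (by linarith))) (exp_pos x).le

end Bellman

section Average

variable {φ : ℝ → ℝ} {a b : ℝ}

lemma avg_eq_intervalAverage (φ : ℝ → ℝ) (a b : ℝ) : avg φ a b = ⨍ x in a..b, φ x :=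
  (interval_average_eq_div φ a b).symm

lemma avg_eq_half_add_half (h : IntervalIntegrable φ volume a b) :
    avg φ a b = (avg φ a ((a + b) / 2) + avg φ ((a + b) / 2) b) / 2 := by
  have hmem : (a + b) / 2 ∈ uIcc a b := by
    rcases le_total a b with hab | hab
    · exact mem_uIcc_of_le (by linarith) (by linarith)
    · exact mem_uIcc_of_ge (by linarith) (by linarith)
  have hadd := intervalIntegral.integral_add_adjacent_intervals
    (h.mono_set (uIcc_subset_uIcc_left hmem)) (h.mono_set (uIcc_subset_uIcc_right hmem))
  rw [avg, avg, avg, ← hadd, show (a + b) / 2 - a = (b - a) / 2 by ring,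
    show b - (a + b) / 2 = (b - a) / 2 by ring, div_div_eq_mul_div, div_div_eq_mul_div]
  ring

lemma sq_avg_le_avg_sq (hab : a < b) (h : IntervalIntegrable φ volume a b)
    (h2 : IntervalIntegrable (fun t => φ t ^ 2) volume a b) :
    avg φ a b ^ 2 ≤ avg (fun t => φ t ^ 2) a b := by
  rw [avg_eq_intervalAverage, avg_eq_intervalAverage]
  refine even_two.convexOn_pow.map_set_average_le (continuous_pow 2).continuousOn isClosed_univ
    ?_ ?_ (by simp) h.def' h2.def'
  · simp [uIoc_of_le hab.le, hab]
  · simp [uIoc_of_le hab.le]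

lemma setAverage_Icc_eq_avg (hab : a ≤ b) : ⨍ x in Icc a b, φ x = avg φ a b := by
  rw [avg_eq_intervalAverage, uIoc_of_le hab, setAverage_congr Ioc_ae_eq_Icc]

end Average

section Dyadic

variable {φ : ℝ → ℝ} {n k : ℕ}

/-- The average of `φ` over the dyadic interval `[k/2^n, (k+1)/2^n]`. -/
noncomputable def dyadicAvg (φ : ℝ → ℝ) (n k : ℕ) : ℝ :=
  avg φ ((k : ℝ) / 2 ^ n) (((k : ℝ) + 1) / 2 ^ n)

/-- The variance `⟨φ²⟩_J - ⟨φ⟩_J²` of `φ` on the dyadic interval `J = [k/2^n, (k+1)/2^n]`. -/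
noncomputable def dyadicVar (φ : ℝ → ℝ) (n k : ℕ) : ℝ :=
  dyadicAvg (fun t => φ t ^ 2) n k - dyadicAvg φ n k ^ 2

lemma dyadicAvg_zero_zero (φ : ℝ → ℝ) : dyadicAvg φ 0 0 = ∫ t in (0 : ℝ)..1, φ t := by
  simp [dyadicAvg, avg]

lemma dyadic_left_lt_right (n k : ℕ) : (k : ℝ) / 2 ^ n < ((k : ℝ) + 1) / 2 ^ n := by
  gcongr; exact lt_add_one _

lemma dyadic_Icc_subset (hk : k < 2 ^ n) :
    Icc ((k : ℝ) / 2 ^ n) (((k : ℝ) + 1) / 2 ^ n) ⊆ Icc 0 1 := by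
  refine Icc_subset_Icc (by positivity) ?_
  rw [div_le_one (by positivity)]
  exact_mod_cast hk

lemma intervalIntegrable_dyadic (h : IntervalIntegrable φ volume 0 1) (hk : k < 2 ^ n) :
    IntervalIntegrable φ volume ((k : ℝ) / 2 ^ n) (((k : ℝ) + 1) / 2 ^ n) := by
  refine h.mono_set ?_
  rw [uIcc_of_le (dyadic_left_lt_right n k).le, uIcc_of_le zero_le_one]
  exact dyadic_Icc_subset hk

lemma dyadicAvg_eq_half_add_half (h : IntervalIntegrable φ volume 0 1) (hk : k < 2 ^ n) :
    dyadicAvg φ n k = (dyadicAvg φ (n + 1) (2 * k) + dyadicAvg φ (n + 1) (2 * k + 1)) / 2 := by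
  have hleft : ((2 * k : ℕ) : ℝ) / 2 ^ (n + 1) = k / 2 ^ n := by
    push_cast; rw [pow_succ]; field_simp
  have hmid : (((2 * k : ℕ) : ℝ) + 1) / 2 ^ (n + 1) = (k / 2 ^ n + (k + 1) / 2 ^ n) / 2 := by
    push_cast; field_simp; ring
  have hmid' : ((2 * k + 1 : ℕ) : ℝ) / 2 ^ (n + 1) = (k / 2 ^ n + (k + 1) / 2 ^ n) / 2 := by
    push_cast; field_simp; ring
  have hright : (((2 * k + 1 : ℕ) : ℝ) + 1) / 2 ^ (n + 1) = (k + 1) / 2 ^ n := by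
    push_cast; field_simp; ring
  rw [dyadicAvg, dyadicAvg, dyadicAvg, hleft, hmid, hmid', hright]
  exact avg_eq_half_add_half (intervalIntegrable_dyadic h hk)

lemma dyadicVar_eq_half_add_sq (h : IntervalIntegrable φ volume 0 1)
    (h2 : IntervalIntegrable (fun t => φ t ^ 2) volume 0 1) (hk : k < 2 ^ n) :
    dyadicVar φ n k = (dyadicVar φ (n + 1) (2 * k) + dyadicVar φ (n + 1) (2 * k + 1)) / 2 +
      ((dyadicAvg φ (n + 1) (2 * k) - dyadicAvg φ (n + 1) (2 * k + 1)) / 2) ^ 2 := by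
  simp only [dyadicVar]
  rw [dyadicAvg_eq_half_add_half h hk, dyadicAvg_eq_half_add_half h2 hk]
  ring

lemma dyadicVar_nonneg (h : IntervalIntegrable φ volume 0 1)
    (h2 : IntervalIntegrable (fun t => φ t ^ 2) volume 0 1) (hk : k < 2 ^ n) :
    0 ≤ dyadicVar φ n k :=
  sub_nonneg.2 (sq_avg_le_avg_sq (dyadic_left_lt_right n k) (intervalIntegrable_dyadic h hk)
    (intervalIntegrable_dyadic h2 hk))

lemma BMOd.dyadicVar_mem_Icc {ε : ℝ} (hφ : BMOd ε φ) (hk : k < 2 ^ n) :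
    dyadicVar φ n k ∈ Icc 0 (ε ^ 2) :=
  ⟨dyadicVar_nonneg hφ.1 hφ.2.1 hk, hφ.2.2 n k hk⟩

lemma sum_range_two_mul {M : Type*} [AddCommMonoid M] (f : ℕ → M) (N : ℕ) :
    ∑ k ∈ Finset.range (2 * N), f k = ∑ k ∈ Finset.range N, (f (2 * k) + f (2 * k + 1)) := by
  induction N with
  | zero => simp
  | succ N ih =>
    rw [mul_add_one, Finset.sum_range_succ, Finset.sum_range_succ, ih, Finset.sum_range_succ,
      add_assoc]

lemma sum_range_two_pow_div_le {B : ℕ → ℕ → ℝ}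
    (hB : ∀ n, ∀ k < 2 ^ n, B (n + 1) (2 * k) + B (n + 1) (2 * k + 1) ≤ 2 * B n k) (n : ℕ) :
    (∑ k ∈ Finset.range (2 ^ n), B n k) / 2 ^ n ≤ B 0 0 := by
  induction n with
  | zero => simp
  | succ n ih =>
    refine le_trans ?_ ih
    rw [pow_succ' (2 : ℕ), pow_succ' (2 : ℝ), sum_range_two_mul, ← div_div]
    gcongr
    rw [div_le_iff₀' two_pos, Finset.mul_sum]
    exact Finset.sum_le_sum fun k hk => hB n k (Finset.mem_range.1 hk)

lemma BMOd.sum_exp_dyadicAvg_mul_psi_le {η α : ℝ} (hη : 0 ≤ η) (hα : 0 ≤ α)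
    (hgap : 0 ≤ extremalGap η α) (hφ : BMOd (√2 * α) φ) (n : ℕ) :
    (∑ k ∈ Finset.range (2 ^ n), exp (dyadicAvg φ n k)) / 2 ^ n * psi √(η ^ 2 + 2 * α ^ 2) ≤
      exp (∫ t in (0 : ℝ)..1, φ t) * psi η := by
  have hvar (n k : ℕ) (hk : k < 2 ^ n) : dyadicVar φ n k ∈ Icc 0 (2 * α ^ 2) := by
    simpa [mul_pow] using hφ.dyadicVar_mem_Icc hk
  have hstep (n k : ℕ) (hk : k < 2 ^ n) :=
    bellman_add_bellman_le hη hα hgap (hvar (n + 1) (2 * k) (by rw [pow_succ]; lia))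
      (hvar (n + 1) (2 * k + 1) (by rw [pow_succ]; lia)) (dyadicAvg_eq_half_add_half hφ.1 hk)
      (dyadicVar_eq_half_add_sq hφ.1 hφ.2.1 hk) (hvar n k hk).2
  calc (∑ k ∈ Finset.range (2 ^ n), exp (dyadicAvg φ n k)) / 2 ^ n * psi √(η ^ 2 + 2 * α ^ 2)
      = (∑ k ∈ Finset.range (2 ^ n), exp (dyadicAvg φ n k) * psi √(η ^ 2 + 2 * α ^ 2)) / 2 ^ n := by
        rw [← Finset.sum_mul]; ring
    _ ≤ (∑ k ∈ Finset.range (2 ^ n), bellman η α (dyadicAvg φ n k) (dyadicVar φ n k)) / 2 ^ n := by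
        gcongr with k hk
        exact exp_mul_psi_le_bellman _ (hvar n k (Finset.mem_range.1 hk)).1
    _ ≤ bellman η α (dyadicAvg φ 0 0) (dyadicVar φ 0 0) := 
        sum_range_two_pow_div_le
          (B := fun n k => bellman η α (dyadicAvg φ n k) (dyadicVar φ n k)) hstep n
    _ ≤ exp (∫ t in (0 : ℝ)..1, φ t) * psi η := by
        rw [dyadicAvg_zero_zero]
        exact bellman_le_exp_mul_psi _ hη (hvar 0 0 (by simp)).2

lemma BMOd.sum_exp_dyadicAvg_le {α : ℝ} (hα : 0 ≤ α) (hα₂ : α < log 2)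
    (hφ : BMOd (√2 * α) φ) (n : ℕ) :
    (∑ k ∈ Finset.range (2 ^ n), exp (dyadicAvg φ n k)) / 2 ^ n ≤
      exp (-α) / (2 - exp α) * exp (∫ t in (0 : ℝ)..1, φ t) := by
  obtain ⟨η, hη, hgap, hpos⟩ := exists_extremalGap_eq_zero hα hα₂
  have hden : 0 < 2 - exp α := sub_pos.2 ((lt_log_iff_exp_lt two_pos).1 hα₂)
  have hratio : psi η = exp (-α) / (2 - exp α) * psi √(η ^ 2 + 2 * α ^ 2) := by
    rw [div_mul_eq_mul_div, eq_div_iff hden.ne', mul_comm]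
    exact sub_eq_zero.1 hgap
  refine le_of_mul_le_mul_right ?_ hpos
  calc _ ≤ exp (∫ t in (0 : ℝ)..1, φ t) * psi η :=
        hφ.sum_exp_dyadicAvg_mul_psi_le hη hα hgap.ge n
    _ = _ := by rw [hratio]; ring

end Dyadic

section Limit

variable {φ : ℝ → ℝ}

lemma closedBall_dyadic_eq_Icc (n k : ℕ) :
    Metric.closedBall (((k : ℝ) + 1 / 2) / 2 ^ n) ((1 / 2) ^ (n + 1)) =
      Icc ((k : ℝ) / 2 ^ n) (((k : ℝ) + 1) / 2 ^ n) := by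
  rw [Real.closedBall_eq_Icc, one_div_pow, pow_succ]
  congr 1 <;> field_simp <;> ring

lemma mem_dyadic_Icc_floor {x : ℝ} (hx : 0 ≤ x) (n : ℕ) :
    x ∈ Icc ((⌊x * 2 ^ n⌋₊ : ℝ) / 2 ^ n) (((⌊x * 2 ^ n⌋₊ : ℝ) + 1) / 2 ^ n) :=
  ⟨(div_le_iff₀ (by positivity)).2 (Nat.floor_le (by positivity)),
    (le_div_iff₀ (by positivity)).2 (Nat.lt_floor_add_one _).le⟩

lemma ae_tendsto_dyadicAvg (hφ : LocallyIntegrable φ) :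
    ∀ᵐ x, 0 ≤ x → Tendsto (fun n => dyadicAvg φ n ⌊x * 2 ^ n⌋₊) atTop (𝓝 (φ x)) := by
  have hradius : Tendsto (fun n : ℕ => (1 / 2 : ℝ) ^ (n + 1)) atTop (𝓝[>] 0) :=
    tendsto_nhdsWithin_iff.2 ⟨(tendsto_pow_atTop_nhds_zero_of_lt_one (by norm_num)
      (by norm_num)).comp (tendsto_add_atTop_nat 1), .of_forall fun n => by
        simp only [mem_Ioi]; positivity⟩
  filter_upwards [IsUnifLocDoublingMeasure.ae_tendsto_average volume hφ 1] with x hx hx₀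
  refine (hx (fun n => ((⌊x * 2 ^ n⌋₊ : ℝ) + 1 / 2) / 2 ^ n) _ hradius
    (.of_forall fun n => ?_)).congr fun n => ?_
  · rw [one_mul, closedBall_dyadic_eq_Icc]
    exact mem_dyadic_Icc_floor hx₀ n
  · rw [closedBall_dyadic_eq_Icc, setAverage_Icc_eq_avg (dyadic_left_lt_right _ _).le, dyadicAvg]

lemma dyadicAvg_indicator_Ioc {n k : ℕ} (hk : k < 2 ^ n) :
    dyadicAvg ((Ioc 0 1).indicator φ) n k = dyadicAvg φ n k := by
  have hle := (dyadic_left_lt_right n k).le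
  obtain ⟨hl, hr⟩ := (Icc_subset_Icc_iff hle).1 (dyadic_Icc_subset hk)
  rw [dyadicAvg, dyadicAvg, avg, avg, intervalIntegral.integral_of_le hle,
    intervalIntegral.integral_of_le hle, setIntegral_congr_fun measurableSet_Ioc fun x hx =>
      indicator_of_mem (Ioc_subset_Ioc hl hr hx) φ]

lemma ae_restrict_tendsto_dyadicAvg (hφ : IntervalIntegrable φ volume 0 1) :
    ∀ᵐ x ∂volume.restrict (Ico 0 1),
      Tendsto (fun n => dyadicAvg φ n ⌊x * 2 ^ n⌋₊) atTop (𝓝 (φ x)) := by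
  have hint : Integrable ((Ioc (0 : ℝ) 1).indicator φ) volume :=
    (integrable_indicator_iff measurableSet_Ioc).2
      ((intervalIntegrable_iff_integrableOn_Ioc_of_le zero_le_one).1 hφ)
  rw [← restrict_Ioo_eq_restrict_Ico, ae_restrict_iff' measurableSet_Ioo]
  filter_upwards [ae_tendsto_dyadicAvg hint.locallyIntegrable] with x hx hx₀₁
  have hlim := hx hx₀₁.1.le
  rw [indicator_of_mem (Ioo_subset_Ioc_self hx₀₁)] at hlim
  refine hlim.congr fun n => dyadicAvg_indicator_Ioc ?_
  rw [Nat.floor_lt (mul_nonneg hx₀₁.1.le (by positivity))]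
  push_cast
  exact mul_lt_of_lt_one_left (by positivity) hx₀₁.2

lemma lintegral_Ico_floor_mul (f : ℕ → ℝ≥0∞) {s : ℝ} (hs : 0 < s) (N : ℕ) :
    ∫⁻ x in Ico 0 (N / s), f ⌊x * s⌋₊ = (∑ k ∈ Finset.range N, f k) / ENNReal.ofReal s := by
  induction N with
  | zero => simp
  | succ N ih =>
    have hle : (N : ℝ) / s ≤ ((N + 1 : ℕ) : ℝ) / s := by gcongr; simp
    have hfloor : EqOn (fun x => f ⌊x * s⌋₊) (fun _ => f N) (Ico (N / s) ((N + 1 : ℕ) / s)) := by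
      intro x hx
      have hx₀ : 0 ≤ x := le_trans (by positivity) hx.1
      have hNx := (div_le_iff₀ hs).1 hx.1
      have hxN := (lt_div_iff₀ hs).1 hx.2
      rw [Nat.cast_succ] at hxN
      simp only [(Nat.floor_eq_iff (by positivity)).2 ⟨hNx, hxN⟩]
    rw [← Ico_union_Ico_eq_Ico (by positivity) hle,
      lintegral_union measurableSet_Ico Ico_disjoint_Ico_same, ih,
      setLIntegral_congr_fun measurableSet_Ico hfloor, setLIntegral_const, Real.volume_Ico,
      ← sub_div, Finset.sum_range_succ, ENNReal.add_div]
    simp [ENNReal.ofReal_inv_of_pos hs, div_eq_mul_inv]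

lemma lintegral_comp_le_of_dyadicAvg {F : ℝ → ℝ≥0∞} {M : ℝ≥0∞} (hF : Continuous F)
    (hφ : IntervalIntegrable φ volume 0 1)
    (hM : ∀ n, (∑ k ∈ Finset.range (2 ^ n), F (dyadicAvg φ n k)) / 2 ^ n ≤ M) :
    ∫⁻ x in Ico 0 1, F (φ x) ≤ M := by
  have hstep (n : ℕ) : ∫⁻ x in Ico (0 : ℝ) 1, F (dyadicAvg φ n ⌊x * 2 ^ n⌋₊) ≤ M := by
    have := lintegral_Ico_floor_mul (fun k => F (dyadicAvg φ n k)) (s := 2 ^ n) (by positivity)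
      (2 ^ n)
    simp only [Nat.cast_pow, Nat.cast_ofNat, div_self (pow_ne_zero n (two_ne_zero' ℝ))] at this
    exact this.trans_le (by simpa [ENNReal.ofReal_pow] using hM n)
  have hmeas (n : ℕ) : Measurable fun x : ℝ => F (dyadicAvg φ n ⌊x * 2 ^ n⌋₊) :=
    (measurable_from_top (f := fun k => F (dyadicAvg φ n k))).comp
      (Nat.measurable_floor.comp (measurable_id.mul_const _))
  calc ∫⁻ x in Ico (0 : ℝ) 1, F (φ x)
      = ∫⁻ x in Ico (0 : ℝ) 1, liminf (fun n => F (dyadicAvg φ n ⌊x * 2 ^ n⌋₊)) atTop := by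
        refine lintegral_congr_ae ?_
        filter_upwards [ae_restrict_tendsto_dyadicAvg hφ] with x hx
        exact ((hF.tendsto _).comp hx).liminf_eq.symm
    _ ≤ liminf (fun n => ∫⁻ x in Ico (0 : ℝ) 1, F (dyadicAvg φ n ⌊x * 2 ^ n⌋₊)) atTop :=
        lintegral_liminf_le hmeas
    _ ≤ M := (liminf_le_liminf (.of_forall hstep)).trans_eq (liminf_const M)

lemma integrable_and_integral_le_of_lintegral_le {X : Type*} [MeasurableSpace X] {μ : Measure X}
    {f : X → ℝ} {M : ℝ} (hf : AEStronglyMeasurable f μ) (hf₀ : 0 ≤ᵐ[μ] f) (hM : 0 ≤ M)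
    (h : ∫⁻ x, ENNReal.ofReal (f x) ∂μ ≤ ENNReal.ofReal M) :
    Integrable f μ ∧ ∫ x, f x ∂μ ≤ M := by
  refine ⟨(lintegral_ofReal_ne_top_iff_integrable hf hf₀).1
    (h.trans_lt ENNReal.ofReal_lt_top).ne, ?_⟩
  rw [integral_eq_lintegral_of_nonneg_ae hf₀ hf]
  exact ENNReal.toReal_le_of_le_ofReal hM h

lemma intervalIntegrable_comp_and_integral_le_of_dyadicAvg {F : ℝ → ℝ} {M : ℝ}
    (hF : Continuous F) (hF₀ : ∀ y, 0 ≤ F y) (hφ : IntervalIntegrable φ volume 0 1)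
    (hM : ∀ n, (∑ k ∈ Finset.range (2 ^ n), F (dyadicAvg φ n k)) / 2 ^ n ≤ M) :
    IntervalIntegrable (fun t => F (φ t)) volume 0 1 ∧ ∫ t in (0 : ℝ)..1, F (φ t) ≤ M := by
  rw [intervalIntegrable_iff_integrableOn_Ioc_of_le zero_le_one,
    intervalIntegral.integral_of_le zero_le_one]
  have hmeas : AEStronglyMeasurable (fun t => F (φ t)) (volume.restrict (Ioc 0 1)) :=
    hF.comp_aestronglyMeasurable
      ((intervalIntegrable_iff_integrableOn_Ioc_of_le zero_le_one).1 hφ).aestronglyMeasurable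
  have hM₀ : 0 ≤ M := le_trans (by simpa using hF₀ (dyadicAvg φ 0 0)) (hM 0)
  refine integrable_and_integral_le_of_lintegral_le hmeas (.of_forall fun t => hF₀ _) hM₀ ?_
  rw [setLIntegral_congr Ico_ae_eq_Ioc.symm]
  refine lintegral_comp_le_of_dyadicAvg (F := fun y => ENNReal.ofReal (F y))
    (ENNReal.continuous_ofReal.comp hF) hφ fun n => ?_
  have htwo : (2 : ℝ≥0∞) ^ n = ENNReal.ofReal (2 ^ n) := by simp [ENNReal.ofReal_pow]
  rw [← ENNReal.ofReal_sum_of_nonneg fun k _ => hF₀ _, htwo,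
    ← ENNReal.ofReal_div_of_pos (by positivity)]
  exact ENNReal.ofReal_le_ofReal (hM n)

end Limit

/-- Dyadic integral-form John–Nirenberg inequality with the sharp constant
`e^{−ε/√2}/(2 − e^{ε/√2})` for `0 ≤ ε < √2 log 2`. -/
theorem stmt3 (ε : ℝ) (hε0 : 0 ≤ ε) (hε1 : ε < Real.sqrt 2 * Real.log 2)
    (φ : ℝ → ℝ) (hφ : BMOd ε φ) :
    IntervalIntegrable (fun t => Real.exp (φ t)) volume 0 1 ∧
    (∫ t in (0:ℝ)..1, Real.exp (φ t)) ≤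
      (Real.exp (-ε / Real.sqrt 2) / (2 - Real.exp (ε / Real.sqrt 2))) *
        Real.exp (∫ t in (0:ℝ)..1, φ t) := by
  have hα : 0 ≤ ε / √2 := by positivity
  have hα₂ : ε / √2 < log 2 := (div_lt_iff₀' (by positivity)).2 hε1
  have hφα : BMOd (√2 * (ε / √2)) φ := by rwa [mul_div_cancel₀ ε (by positivity)]
  rw [neg_div]
  exact intervalIntegrable_comp_and_integral_le_of_dyadicAvg continuous_exp
    (fun x => (exp_pos x).le) hφ.1 (hφα.sum_exp_dyadicAvg_le hα hα₂)
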